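/- arXiv:2002.05059 — 2 statements merged into one kernel-verified Lean document; each statement's English description precedes it below -/
import Mathlib

section
/- Single-layer invertibility: let W be an m×m real matrix, b ∈ ℝ^m, and let A be the unbiased Lorentzian Goldilocks activation A(t) = t + t/(π(1+t²)). The Goldilocks layer map L : ℝ^m → ℝ^m, L(x)_i = A((Wx + b)_i), is a bijection of ℝ^m if and only if W is invertible (has full rank). -/
open Real

/-- The unbiased Lorentzian Goldilocks activation. -/
noncomputable def goldilocksA : ℝ → ℝ := fun t => t + t / (π * (1 + t ^ 2))

/-- The Goldilocks layer map `L(x)ᵢ = A((Wx + b)ᵢ)` applies the activation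
componentwise to an affine map. -/
noncomputable def goldilocksLayer {m : ℕ} (W : Matrix (Fin m) (Fin m) ℝ)
    (b : Fin m → ℝ) (x : Fin m → ℝ) : Fin m → ℝ :=
  fun i => goldilocksA ((W.mulVec x + b) i)

/-!
A layer is the composite of `x ↦ W x`, a translation, and the activation acting on each coordinate.
When the activation is a bijection of the line, the last two maps are bijections, so the layer is
bijective exactly when `W` is invertible.

The activation `t ↦ t + a t / (1 + t²)` is a bounded continuous perturbation of the identity, hence
surjective. Its derivative is `1 + a (1 - t²) / (1 + t²)²`, where `(1 - t²) / (1 + t²)²` ranges over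
`[-1/8, 1]`; this is why it is strictly increasing for `-1 ≤ a ≤ 8`, a range containing `a = 1/π`.
-/

open Function Filter
open scoped Matrix

section Layer

variable {ι R S : Type*} [Fintype ι] [DecidableEq ι] [CommRing R]

theorem bijective_mulVec_iff_isUnit {W : Matrix ι ι R} : Bijective W.mulVec ↔ IsUnit W :=
  ⟨fun hW => Matrix.mulVec_surjective_iff_isUnit.1 hW.surjective,
    fun hW => ⟨Matrix.mulVec_injective_of_isUnit hW, Matrix.mulVec_surjective_iff_isUnit.2 hW⟩⟩

theorem bijective_map_mulVec_add_iff_isUnit {σ : R → S} (hσ : Bijective σ) (W : Matrix ι ι R)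
    (b : ι → R) : Bijective (fun x i => σ ((W *ᵥ x + b) i)) ↔ IsUnit W := by
  have hmap : Bijective (Pi.map fun _ : ι => σ) := .piMap fun _ => hσ
  have htranslate : Bijective (· + b) := AddGroup.addRight_bijective b
  calc Bijective (fun x i => σ ((W *ᵥ x + b) i))
      ↔ Bijective ((Pi.map fun _ : ι => σ) ∘ (· + b) ∘ W.mulVec) := Iff.rfl
    _ ↔ Bijective W.mulVec := by rw [hmap.of_comp_iff', htranslate.of_comp_iff']
    _ ↔ IsUnit W := bijective_mulVec_iff_isUnit

end Layer

theorem surjective_add_of_abs_le {f : ℝ → ℝ} {C : ℝ} (hf : Continuous f) (hC : ∀ t, |f t| ≤ C) :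
    Surjective fun t => t + f t :=
  (continuous_id.add hf).surjective
    (tendsto_atTop_add_right_of_le atTop (-C) tendsto_id fun t => (abs_le.1 (hC t)).1)
    (tendsto_atBot_add_right_of_ge atBot C tendsto_id fun t => (abs_le.1 (hC t)).2)

/-- The Lorentzian activation of amplitude `a`; the Goldilocks activation has `a = π⁻¹`. -/
noncomputable def lorentzianActivation (a t : ℝ) : ℝ := t + a * (t / (1 + t ^ 2))

theorem abs_div_one_add_sq_le_half (t : ℝ) : |t / (1 + t ^ 2)| ≤ 1 / 2 := by
  have hpos : 0 < 1 + t ^ 2 := by positivity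
  rw [abs_div, abs_of_pos hpos, div_le_iff₀ hpos]
  linarith [two_mul_le_add_sq 1 |t|, sq_abs t]

theorem lorentzianActivation_surjective (a : ℝ) : Surjective (lorentzianActivation a) := by
  have hcont : Continuous fun t : ℝ => a * (t / (1 + t ^ 2)) :=
    continuous_const.mul (continuous_id.div (by fun_prop) fun t => by positivity)
  refine surjective_add_of_abs_le (C := |a| * (1 / 2)) hcont fun t => ?_
  rw [abs_mul]
  gcongr
  exact abs_div_one_add_sq_le_half t

theorem lorentzianActivation_sub (a s t : ℝ) :
    lorentzianActivation a t - lorentzianActivation a s =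
      (t - s) * ((1 + s ^ 2) * (1 + t ^ 2) + a * (1 - s * t)) / ((1 + s ^ 2) * (1 + t ^ 2)) := by
  unfold lorentzianActivation
  field_simp
  ring

theorem one_add_sq_mul_one_add_sq_add_pos {a s t : ℝ} (ha : a ∈ Set.Icc (-1) 8) (hst : s ≠ t) :
    0 < (1 + s ^ 2) * (1 + t ^ 2) + a * (1 - s * t) := by
  obtain ⟨ha₁, ha₈⟩ := ha
  have hsq : 0 < (s - t) ^ 2 := sq_pos_of_ne_zero (sub_ne_zero.2 hst)
  have hlower : 0 < (1 + s ^ 2) * (1 + t ^ 2) + (-1) * (1 - s * t) := by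
    linarith [sq_nonneg (s + t), sq_nonneg (s * t)]
  have hupper : 0 < (1 + s ^ 2) * (1 + t ^ 2) + 8 * (1 - s * t) := by
    linarith [sq_nonneg (s * t - 3)]
  -- The expression is affine in `a`, so positivity at the two endpoints suffices.
  rcases le_total (s * t) 1 with hle | hge
  · linarith [mul_le_mul_of_nonneg_right ha₁ (sub_nonneg.2 hle)]
  · linarith [mul_le_mul_of_nonpos_right ha₈ (sub_nonpos.2 hge)]

theorem lorentzianActivation_strictMono {a : ℝ} (ha : a ∈ Set.Icc (-1) 8) :
    StrictMono (lorentzianActivation a) := by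
  intro s t hst
  rw [← sub_pos, lorentzianActivation_sub]
  exact div_pos (mul_pos (sub_pos.2 hst) (one_add_sq_mul_one_add_sq_add_pos ha hst.ne))
    (by positivity)

theorem lorentzianActivation_bijective {a : ℝ} (ha : a ∈ Set.Icc (-1) 8) :
    Bijective (lorentzianActivation a) :=
  ⟨(lorentzianActivation_strictMono ha).injective, lorentzianActivation_surjective a⟩

theorem goldilocksA_eq_lorentzianActivation : goldilocksA = lorentzianActivation π⁻¹ := by
  funext t
  unfold goldilocksA lorentzianActivation
  field_simp

theorem inv_pi_mem_Icc : π⁻¹ ∈ Set.Icc (-1 : ℝ) 8 := by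
  have hpos : 0 < π⁻¹ := inv_pos.2 pi_pos
  have hle : π⁻¹ ≤ 1 := inv_le_one_of_one_le₀ (by linarith [pi_gt_three])
  constructor <;> linarith

theorem goldilocks_layer_bijective_iff_general {ι : Type*} [Fintype ι] [DecidableEq ι] {a : ℝ}
    (ha : a ∈ Set.Icc (-1) 8) (W : Matrix ι ι ℝ) (b : ι → ℝ) :
    Bijective (fun x i => lorentzianActivation a ((W *ᵥ x + b) i)) ↔ IsUnit W :=
  bijective_map_mulVec_add_iff_isUnit (lorentzianActivation_bijective ha) W b

/-- Single-layer invertibility: the Goldilocks layer map is a bijection of `ℝᵐ`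
if and only if the weight matrix `W` is invertible. -/
theorem goldilocks_layer_bijective_iff {m : ℕ} (W : Matrix (Fin m) (Fin m) ℝ)
    (b : Fin m → ℝ) :
    Function.Bijective (goldilocksLayer W b) ↔ IsUnit W := by
  unfold goldilocksLayer
  rw [goldilocksA_eq_lorentzianActivation]
  exact goldilocks_layer_bijective_iff_general inv_pi_mem_Icc W b
end

section
/- Equivalence of the direct and interpretable formulations: let W_0, …, W_N be invertible m×m real matrices, b_0, …, b_N ∈ ℝ^m, and g : ℝ → ℝ any function applied componentwise to vectors. Define V_0 = W_0, V_n = W_n·V_{n−1}; c_0 = b_0, c_n = W_n·c_{n−1} + b_n. Suppose the sequence x_0, x_1, …, x_{N+1} ∈ ℝ^m satisfies the direct feed-forward recursion x_{n+1} = W_n x_n + b_n + g(W_n x_n + b_n), and set y_0 = x_0 and y_n = V_{n−1}^{−1}(x_n − c_{n−1}) for n ≥ 1. Then the sequence y_n satisfies the interpretable recursion y_{n+1} = y_n + V_n^{−1} g(V_n y_n + c_n) for all n = 0, …, N. -/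
/-!
The vector `y n` is `x n` with the affine map `z ↦ V (n - 1) z + c (n - 1)`, the composite of all
earlier affine layers, undone. Hence layer `n` sees the same pre-activation in both coordinates,
`W n x n + b n = V n y n + c n`, and undoing the affine map `z ↦ V n z + c n` on
`x (n + 1) = (V n y n + c n) + g (V n y n + c n)` leaves `y n + (V n)⁻¹ g (V n y n + c n)`.
-/

open Matrix

theorem isUnit_of_succ_eq_mul {M : Type*} [Monoid M] {W V : ℕ → M} (hV0 : V 0 = W 0)
    (hV : ∀ n, V (n + 1) = W (n + 1) * V n) {n : ℕ} (hW : ∀ k ≤ n, IsUnit (W k)) :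
    IsUnit (V n) := by
  induction n with
  | zero => exact hV0 ▸ hW 0 le_rfl
  | succ n ih =>
    rw [hV]
    exact (hW (n + 1) le_rfl).mul (ih fun k hk => hW k (Nat.le_succ_of_le hk))

section

variable {R ι : Type*} [CommRing R] [Fintype ι] [DecidableEq ι]

theorem mulVec_inv_mulVec_of_isUnit {A : Matrix ι ι R} (hA : IsUnit A) (v : ι → R) :
    A *ᵥ (A⁻¹ *ᵥ v) = v := by
  rw [mulVec_mulVec, mul_nonsing_inv _ ((isUnit_iff_isUnit_det A).1 hA), one_mulVec]

theorem inv_mulVec_mulVec_of_isUnit {A : Matrix ι ι R} (hA : IsUnit A) (v : ι → R) :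
    A⁻¹ *ᵥ (A *ᵥ v) = v := by
  rw [mulVec_mulVec, nonsing_inv_mul _ ((isUnit_iff_isUnit_det A).1 hA), one_mulVec]

theorem direct_preactivation_eq_interpretable_preactivation {W V : ℕ → Matrix ι ι R}
    {b c x y : ℕ → ι → R} (hV0 : V 0 = W 0) (hV : ∀ n, V (n + 1) = W (n + 1) * V n)
    (hc0 : c 0 = b 0) (hc : ∀ n, c (n + 1) = W (n + 1) *ᵥ c n + b (n + 1))
    (hy0 : y 0 = x 0) (hy : ∀ n, y (n + 1) = (V n)⁻¹ *ᵥ (x (n + 1) - c n))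
    {n : ℕ} (hW : ∀ k < n, IsUnit (W k)) :
    W n *ᵥ x n + b n = V n *ᵥ y n + c n := by
  cases n with
  | zero => rw [hV0, hc0, hy0]
  | succ n =>
    have hVn : IsUnit (V n) :=
      isUnit_of_succ_eq_mul hV0 hV fun k hk => hW k (Nat.lt_succ_of_le hk)
    have undo_y : V n *ᵥ y (n + 1) + c n = x (n + 1) := by
      rw [hy, mulVec_inv_mulVec_of_isUnit hVn, sub_add_cancel]
    calc W (n + 1) *ᵥ x (n + 1) + b (n + 1)
        = W (n + 1) *ᵥ (V n *ᵥ y (n + 1) + c n) + b (n + 1) := by rw [undo_y]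
      _ = V (n + 1) *ᵥ y (n + 1) + c (n + 1) := by
        rw [hV, hc, mulVec_add, mulVec_mulVec, add_assoc]

theorem goldilocks_direct_interpretable_equiv_general (N : ℕ)
    (W : ℕ → Matrix ι ι R) (b : ℕ → ι → R) (hW : ∀ n ≤ N, IsUnit (W n))
    (g : ℕ → (ι → R) → ι → R)
    (V : ℕ → Matrix ι ι R) (hV0 : V 0 = W 0) (hV : ∀ n, V (n + 1) = W (n + 1) * V n)
    (c : ℕ → ι → R) (hc0 : c 0 = b 0) (hc : ∀ n, c (n + 1) = W (n + 1) *ᵥ c n + b (n + 1))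
    (x : ℕ → ι → R)
    (hx : ∀ n ≤ N, x (n + 1) = W n *ᵥ x n + b n + g n (W n *ᵥ x n + b n))
    (y : ℕ → ι → R) (hy0 : y 0 = x 0)
    (hy : ∀ n, y (n + 1) = (V n)⁻¹ *ᵥ (x (n + 1) - c n)) :
    ∀ n ≤ N, y (n + 1) = y n + (V n)⁻¹ *ᵥ g n (V n *ᵥ y n + c n) := by
  intro n hn
  have hVn : IsUnit (V n) := isUnit_of_succ_eq_mul hV0 hV fun k hk => hW k (hk.trans hn)
  have same_preactivation : W n *ᵥ x n + b n = V n *ᵥ y n + c n :=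
    direct_preactivation_eq_interpretable_preactivation hV0 hV hc0 hc hy0 hy
      fun k hk => hW k (hk.le.trans hn)
  calc y (n + 1)
      = (V n)⁻¹ *ᵥ (V n *ᵥ y n + c n + g n (V n *ᵥ y n + c n) - c n) := by
        rw [hy, hx n hn, same_preactivation]
    _ = (V n)⁻¹ *ᵥ (V n *ᵥ y n + g n (V n *ᵥ y n + c n)) := by
        rw [add_right_comm, add_sub_cancel_right]
    _ = y n + (V n)⁻¹ *ᵥ g n (V n *ᵥ y n + c n) := by
        rw [mulVec_add, inv_mulVec_mulVec_of_isUnit hVn]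

end

/-- Equivalence of the direct and interpretable formulations of a Goldilocks network:
if `x` satisfies the direct recursion `x_{n+1} = W_n x_n + b_n + g(W_n x_n + b_n)`
(componentwise `g`), `V_n = W_n ⋯ W_0`, `c_n = W_n c_{n−1} + b_n` with `c_0 = b_0`,
and `y_0 = x_0`, `y_n = V_{n−1}⁻¹ (x_n − c_{n−1})` for `n ≥ 1`, then `y` satisfies the
interpretable recursion `y_{n+1} = y_n + V_n⁻¹ g(V_n y_n + c_n)` for all `n ≤ N`. -/
theorem goldilocks_direct_interpretable_equiv {m : ℕ} (N : ℕ)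
    (W : ℕ → Matrix (Fin m) (Fin m) ℝ) (b : ℕ → Fin m → ℝ)
    (hW : ∀ n ≤ N, IsUnit (W n))
    (g : ℝ → ℝ)
    (V : ℕ → Matrix (Fin m) (Fin m) ℝ)
    (hV0 : V 0 = W 0)
    (hV : ∀ n, V (n + 1) = W (n + 1) * V n)
    (c : ℕ → Fin m → ℝ)
    (hc0 : c 0 = b 0)
    (hc : ∀ n, c (n + 1) = (W (n + 1)).mulVec (c n) + b (n + 1))
    (x : ℕ → Fin m → ℝ)
    (hx : ∀ n ≤ N, x (n + 1) =
      (W n).mulVec (x n) + b n + fun i => g (((W n).mulVec (x n) + b n) i))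
    (y : ℕ → Fin m → ℝ)
    (hy0 : y 0 = x 0)
    (hy : ∀ n, y (n + 1) = (V n)⁻¹.mulVec (x (n + 1) - c n)) :
    ∀ n ≤ N, y (n + 1) = y n + (V n)⁻¹.mulVec
      (fun i => g (((V n).mulVec (y n) + c n) i)) := by
  exact goldilocks_direct_interpretable_equiv_general N W b hW (fun _ z i => g (z i))
    V hV0 hV c hc0 hc x hx y hy0 hy
end
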